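/- For every named GS4 derivation P with conclusion ⊢Γ, there is a cut-free named GS4 derivation Q with conclusion ⊢Γ such that ⟨⟨P⟩⟩ = ⟨⟨Q⟩⟩ (cut-elimination preserving branch-labeled axiom graphs). -/

import Mathlib

open scoped Classical

noncomputable section

namespace GS4

/-- Named classical propositional formulas over atoms `α`, with names in `ℕ`. -/
inductive NForm (α : Type) : Type
  | atom : ℕ → α → NForm α
  | or   : NForm α → NForm α → NForm α
  | and  : NForm α → NForm α → NForm α

variable {α : Type}

/-- Name-preserving De Morgan negation, w.r.t. an involution `bar` on atoms. -/
def negF (bar : α → α) : NForm α → NForm α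
  | .atom x a => .atom x (bar a)
  | .or A B => .and (negF bar A) (negF bar B)
  | .and A B => .or (negF bar A) (negF bar B)

/-- The set of names occurring in a named formula. -/
def NForm.names : NForm α → Set ℕ
  | .atom x _ => {x}
  | .or A B => A.names ∪ B.names
  | .and A B => A.names ∪ B.names

/-- A named formula is sharing-free if every name occurs at most once in it. -/
def NForm.sharingFree : NForm α → Prop
  | .atom _ _ => True
  | .or A B => A.sharingFree ∧ B.sharingFree ∧ Disjoint A.names B.names
  | .and A B => A.sharingFree ∧ B.sharingFree ∧ Disjoint A.names B.names

def NForm.isAtom : NForm α → Prop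
  | .atom _ _ => True
  | _ => False

/-- Anonymous formulas (shapes): `A ≡ B` iff their shapes coincide. -/
inductive Shape (α : Type) : Type
  | atom : α → Shape α
  | or   : Shape α → Shape α → Shape α
  | and  : Shape α → Shape α → Shape α

def NForm.shape : NForm α → Shape α
  | .atom _ a => .atom a
  | .or A B => .or A.shape B.shape
  | .and A B => .and A.shape B.shape

/-- `HasAtom A x a`: the atomic formula `x:a` occurs in `A`. -/
def HasAtom : NForm α → ℕ → α → Prop
  | .atom y b, x, a => y = x ∧ b = a
  | .or A B, x, a => HasAtom A x a ∨ HasAtom B x a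
  | .and A B, x, a => HasAtom A x a ∨ HasAtom B x a

/-- Names of a finite set of named formulas. -/
def snames (Γ : Finset (NForm α)) : Set ℕ := ⋃ A ∈ Γ, A.names

/-- A finite set of named formulas is sharing-free if all its elements are
sharing-free with pairwise disjoint name sets. -/
def SFSet (Γ : Finset (NForm α)) : Prop :=
  (∀ A ∈ Γ, A.sharingFree) ∧
  ∀ A ∈ Γ, ∀ B ∈ Γ, A ≠ B → Disjoint A.names B.names

/-- `x:a` occurs in some formula of `Γ` (i.e. `Γ[x] = a` for sharing-free `Γ`). -/
def HasAtomS (Γ : Finset (NForm α)) (x : ℕ) (a : α) : Prop :=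
  ∃ A ∈ Γ, HasAtom A x a

/-- Branch sets of named formulas. -/
def BrF : NForm α → Set (Set ℕ)
  | .atom x _ => {{x}}
  | .or A B => {X | ∃ Y ∈ BrF A, ∃ Z ∈ BrF B, X = Y ∪ Z}
  | .and A B => BrF A ∪ BrF B

/-- Branch sets of sequents (finite sharing-free sets of named formulas). -/
def BrS (Γ : Finset (NForm α)) : Set (Set ℕ) :=
  {X | X ⊆ snames Γ ∧ ∀ A ∈ Γ, X ∩ A.names ∈ BrF A}

/-! ## Branch-labeled name graphs -/

/-- A branch-labeled name graph: vertices and a relation between unordered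
pairs of vertices and branch labels. -/
structure BLGraph : Type where
  verts : Set ℕ
  rel : Sym2 ℕ → Set ℕ → Prop

/-- Well-formedness of a bl-graph: related pairs consist of distinct vertices,
labels are sets of vertices, and each edge is included in its labels. -/
def BLGraph.IsBL (G : BLGraph) : Prop :=
  ∀ e X, G.rel e X → ¬ e.IsDiag ∧ X ⊆ G.verts ∧ ∀ v ∈ e, v ∈ X

def BLGraph.Edges (G : BLGraph) : Set (Sym2 ℕ) := {e | ∃ X, G.rel e X}

def BLGraph.Br (G : BLGraph) : Set (Set ℕ) := {X | ∃ e, G.rel e X}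

def BLGraph.union (G H : BLGraph) : BLGraph :=
  ⟨G.verts ∪ H.verts, fun e X => G.rel e X ∨ H.rel e X⟩

/-- Restriction `G↾_S` of a bl-graph. -/
def BLGraph.restrict (G : BLGraph) (S : Set ℕ) : BLGraph :=
  ⟨G.verts ∩ S, fun e X => G.rel e X ∧ X ⊆ S⟩

/-- The interface-relativized edge-branch relation `e ⊰^I_G X`. -/
def BLGraph.relI (G : BLGraph) (I : Set ℕ) (e : Sym2 ℕ) (X : Set ℕ) : Prop :=
  ∃ Y, G.rel e Y ∧ X = Y \ I

/-- `z 0, …, z (n-1)` is an `X`-labeled alternating path between `G` and `H`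
through the interface `I`. -/
def AltPath (G H : BLGraph) (I X : Set ℕ) (n : ℕ) (z : ℕ → ℕ) : Prop :=
  1 < n ∧
  (∀ i < n, ∀ j < n, z i = z j → i = j) ∧
  (∀ i, 0 < i → i + 1 < n → z i ∈ I) ∧
  ((∀ i, i + 1 < n →
      (Even i → G.relI I s(z i, z (i + 1)) X) ∧ (¬ Even i → H.relI I s(z i, z (i + 1)) X)) ∨
   (∀ i, i + 1 < n →
      (Even i → H.relI I s(z i, z (i + 1)) X) ∧ (¬ Even i → G.relI I s(z i, z (i + 1)) X)))

/-- Composition of bl-graphs over an interface `I`. -/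
def BLGraph.comp (G H : BLGraph) (I : Set ℕ) : BLGraph :=
  ⟨(G.verts ∪ H.verts) \ I,
   fun e X => ∃ n z, AltPath G H I X n z ∧ z 0 ∉ I ∧ z (n - 1) ∉ I ∧
     e = s(z 0, z (n - 1))⟩

/-- The weakening operator on bl-graphs: add vertices `V` and extend every
branch label by a member of `Brs`. -/
def blwk (V : Set ℕ) (Brs : Set (Set ℕ)) (G : BLGraph) : BLGraph :=
  ⟨G.verts ∪ V, fun e X => ∃ Y Z, G.rel e Y ∧ Z ∈ Brs ∧ X = Y ∪ Z⟩

/-- The bl-identity graph `id_{A,C}` on a pair of dual formulas. -/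
def blid : NForm α → NForm α → BLGraph
  | .atom x _, .atom y _ => ⟨{x, y}, fun e X => e = s(x, y) ∧ X = {x, y}⟩
  | .or A1 A2, .and C1 C2 =>
      (blwk A2.names (BrF A2) (blid A1 C1)).union (blwk A1.names (BrF A1) (blid A2 C2))
  | .and A1 A2, .or C1 C2 =>
      (blwk C2.names (BrF C2) (blid A1 C1)).union (blwk C1.names (BrF C1) (blid A2 C2))
  | _, _ => ⟨∅, fun _ _ => False⟩

/-! ## Simple name graphs -/

/-- A simple name graph. -/
structure NGraph : Type where
  verts : Set ℕ
  edges : Set (Sym2 ℕ)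

/-- Subgraph relation `H ⊑ G`. -/
def NGraph.Sub (H G : NGraph) : Prop := H.verts ⊆ G.verts ∧ H.edges ⊆ G.edges

def NGraph.union (G H : NGraph) : NGraph := ⟨G.verts ∪ H.verts, G.edges ∪ H.edges⟩

/-- Induced subgraph `G↾_S`. -/
def NGraph.restrict (G : NGraph) (S : Set ℕ) : NGraph :=
  ⟨G.verts ∩ S, {e ∈ G.edges | ∀ v ∈ e, v ∈ S}⟩

/-- Alternating paths between simple name graphs through an interface. -/
def NAltPath (G H : NGraph) (I : Set ℕ) (n : ℕ) (z : ℕ → ℕ) : Prop :=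
  0 < n ∧
  (∀ i < n, ∀ j < n, z i = z j → i = j) ∧
  (∀ i, 0 < i → i + 1 < n → z i ∈ I) ∧
  ((∀ i, i + 1 < n →
      (Even i → s(z i, z (i + 1)) ∈ G.edges) ∧ (¬ Even i → s(z i, z (i + 1)) ∈ H.edges)) ∨
   (∀ i, i + 1 < n →
      (Even i → s(z i, z (i + 1)) ∈ H.edges) ∧ (¬ Even i → s(z i, z (i + 1)) ∈ G.edges)))

/-- Composition of simple name graphs over an interface. -/
def NGraph.comp (G H : NGraph) (I : Set ℕ) : NGraph :=
  ⟨(G.verts ∪ H.verts) \ I,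
   {e | ∃ x y, x ≠ y ∧ x ∈ (G.verts ∪ H.verts) \ I ∧ y ∈ (G.verts ∪ H.verts) \ I ∧
        e = s(x, y) ∧ ∃ n z, NAltPath G H I n z ∧ z 0 = x ∧ z (n - 1) = y}⟩

/-- The identity graph `Id_{A,C}` on a pair of dual formulas. -/
def idg : NForm α → NForm α → NGraph
  | .atom x _, .atom y _ => ⟨{x, y}, {s(x, y)}⟩
  | .or A1 A2, .and C1 C2 => (idg A1 C1).union (idg A2 C2)
  | .and A1 A2, .or C1 C2 => (idg A1 C1).union (idg A2 C2)
  | _, _ => ⟨∅, ∅⟩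

/-- The edgeless (weakening) graph on the names of `Γ`. -/
def wkg (Γ : Finset (NForm α)) : NGraph := ⟨snames Γ, ∅⟩

/-! ## Named GS4 derivations -/

/-- Named GS4 derivation trees. -/
inductive Deriv (α : Type) : Type
  | ax (Γ : Finset (NForm α)) (A C : NForm α)
  | cut (A : NForm α) (P Q : Deriv α)
  | sup (P Q : Deriv α)
  | orI (A B : NForm α) (P : Deriv α)
  | andI (A B : NForm α) (P Q : Deriv α)

/-- Conclusion of a derivation tree. -/
def concl : Deriv α → Finset (NForm α)
  | .ax Γ A C => insert A (insert C Γ)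
  | .cut A P _ => (concl P).erase A
  | .sup P _ => concl P
  | .orI A B P => insert (NForm.or A B) (((concl P).erase A).erase B)
  | .andI A B P _ => insert (NForm.and A B) ((concl P).erase A)

/-- Well-formedness of derivation trees w.r.t. the atom involution `bar`:
each rule is applied correctly to sharing-free named sequents. -/
def WF (bar : α → α) : Deriv α → Prop
  | .ax Γ A C =>
      A.shape = (negF bar C).shape ∧
      A.sharingFree ∧ C.sharingFree ∧ SFSet Γ ∧
      Disjoint A.names C.names ∧
      Disjoint A.names (snames Γ) ∧ Disjoint C.names (snames Γ)
  | .cut A P Q =>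
      WF bar P ∧ WF bar Q ∧
      ∃ Γ : Finset (NForm α), A ∉ Γ ∧ negF bar A ∉ Γ ∧
        concl P = insert A Γ ∧ concl Q = insert (negF bar A) Γ ∧
        A.sharingFree ∧ SFSet Γ ∧ Disjoint A.names (snames Γ)
  | .sup P Q => WF bar P ∧ WF bar Q ∧ concl P = concl Q
  | .orI A B P =>
      WF bar P ∧
      ∃ Γ : Finset (NForm α), A ∉ Γ ∧ B ∉ Γ ∧ A ≠ B ∧
        concl P = insert A (insert B Γ) ∧
        A.sharingFree ∧ B.sharingFree ∧ SFSet Γ ∧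
        Disjoint A.names B.names ∧
        Disjoint A.names (snames Γ) ∧ Disjoint B.names (snames Γ)
  | .andI A B P Q =>
      WF bar P ∧ WF bar Q ∧
      ∃ Γ : Finset (NForm α), A ∉ Γ ∧ B ∉ Γ ∧
        concl P = insert A Γ ∧ concl Q = insert B Γ ∧
        A.sharingFree ∧ B.sharingFree ∧ SFSet Γ ∧
        Disjoint A.names B.names ∧
        Disjoint A.names (snames Γ) ∧ Disjoint B.names (snames Γ)

/-- A derivation is cut-free if it contains no cut rule. -/
def CutFree : Deriv α → Prop
  | .ax _ _ _ => True
  | .cut _ _ _ => False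
  | .sup P Q => CutFree P ∧ CutFree Q
  | .orI _ _ P => CutFree P
  | .andI _ _ P Q => CutFree P ∧ CutFree Q

/-- The branch-labeled axiom graph `⟨⟨P⟩⟩` of a derivation. -/
def blaxg : Deriv α → BLGraph
  | .ax Γ A C => blwk (snames Γ) (BrS Γ) (blid A C)
  | .cut A P Q => BLGraph.comp (blaxg P) (blaxg Q) A.names
  | .sup P Q => (blaxg P).union (blaxg Q)
  | .orI _ _ P => blaxg P
  | .andI _ _ P Q => (blaxg P).union (blaxg Q)

/-- The (simple) axiom graph `⟦P⟧` of a derivation. -/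
def axg : Deriv α → NGraph
  | .ax Γ A C => (wkg Γ).union (idg A C)
  | .cut A P Q => NGraph.comp (axg P) (axg Q) A.names
  | .sup P Q => (axg P).union (axg Q)
  | .orI _ _ P => axg P
  | .andI _ _ P Q => (axg P).union (axg Q)

/-! ## Inversion and isolation -/

/-- Inversion of a disjunction `D ∨ E` in the conclusion. -/
def inv (D E : NForm α) : Deriv α → Deriv α
  | .ax Γ A C =>
      if A = NForm.or D E then
        match C with
        | .and C1 C2 =>
            .andI C1 C2 (.ax (insert E Γ) D C1) (.ax (insert D Γ) E C2)
        | _ => .ax Γ A C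
      else if C = NForm.or D E then
        match A with
        | .and A1 A2 =>
            .andI A1 A2 (.ax (insert E Γ) A1 D) (.ax (insert D Γ) A2 E)
        | _ => .ax Γ A C
      else
        .ax (insert D (insert E (Γ.erase (NForm.or D E)))) A C
  | .cut A P Q => .cut A (inv D E P) (inv D E Q)
  | .sup P Q => .sup (inv D E P) (inv D E Q)
  | .orI A B P => if A = D ∧ B = E then P else .orI A B (inv D E P)
  | .andI A B P Q => .andI A B (inv D E P) (inv D E Q)

/-- Left inversion of a conjunction `D ∧ E` in the conclusion. -/
def invl (D E : NForm α) : Deriv α → Deriv α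
  | .ax Γ A C =>
      if A = NForm.and D E then
        match C with
        | .or C1 C2 => .orI C1 C2 (.ax (insert C2 Γ) D C1)
        | _ => .ax Γ A C
      else if C = NForm.and D E then
        match A with
        | .or A1 A2 => .orI A1 A2 (.ax (insert A2 Γ) A1 D)
        | _ => .ax Γ A C
      else
        .ax (insert D (Γ.erase (NForm.and D E))) A C
  | .cut A P Q => .cut A (invl D E P) (invl D E Q)
  | .sup P Q => .sup (invl D E P) (invl D E Q)
  | .orI A B P => .orI A B (invl D E P)
  | .andI A B P Q => if A = D ∧ B = E then P else .andI A B (invl D E P) (invl D E Q)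

/-- Right inversion of a conjunction `D ∧ E` in the conclusion. -/
def invr (D E : NForm α) : Deriv α → Deriv α
  | .ax Γ A C =>
      if A = NForm.and D E then
        match C with
        | .or C1 C2 => .orI C1 C2 (.ax (insert C1 Γ) E C2)
        | _ => .ax Γ A C
      else if C = NForm.and D E then
        match A with
        | .or A1 A2 => .orI A1 A2 (.ax (insert A1 Γ) A2 E)
        | _ => .ax Γ A C
      else
        .ax (insert E (Γ.erase (NForm.and D E))) A C
  | .cut A P Q => .cut A (invr D E P) (invr D E Q)
  | .sup P Q => .sup (invr D E P) (invr D E Q)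
  | .orI A B P => .orI A B (invr D E P)
  | .andI A B P Q => if A = D ∧ B = E then Q else .andI A B (invr D E P) (invr D E Q)

/-- Isolation of a non-atomic formula in the conclusion. -/
def isl : NForm α → Deriv α → Deriv α
  | .or A B, P => .orI A B (inv A B P)
  | .and A B, P => .andI A B (invl A B P) (invr A B P)
  | .atom _ _, P => P

/-- Totality of a bl-graph w.r.t. a sharing-free named sequent. -/
def Total (bar : α → α) (G : BLGraph) (Γ : Finset (NForm α)) : Prop :=
  G.verts = snames Γ ∧
  G.Br = BrS Γ ∧
  ∀ x y : ℕ, s(x, y) ∈ G.Edges →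
    ∀ a b : α, HasAtomS Γ x a → HasAtomS Γ y b → a = bar b

end GS4

namespace GS4

variable {α : Type}

/-! ### Names, branches and atoms -/

theorem NForm.names_nonempty (A : NForm α) : A.names.Nonempty := by
  induction A with
  | atom x a => exact ⟨x, rfl⟩
  | or A B ihA _ => exact ihA.mono Set.subset_union_left
  | and A B ihA _ => exact ihA.mono Set.subset_union_left

@[simp]
theorem names_negF (bar : α → α) (A : NForm α) : (negF bar A).names = A.names := by
  induction A <;> simp_all [negF, NForm.names]

theorem sharingFree_negF (bar : α → α) {A : NForm α} (h : A.sharingFree) :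
    (negF bar A).sharingFree := by
  induction A <;> simp_all [negF, NForm.sharingFree]

theorem subset_names_of_mem_BrF {A : NForm α} {X : Set ℕ} (h : X ∈ BrF A) : X ⊆ A.names := by
  induction A generalizing X with
  | atom x a => exact subset_of_eq h
  | or A B ihA ihB =>
    obtain ⟨Y, hY, Z, hZ, rfl⟩ := h
    exact Set.union_subset_union (ihA hY) (ihB hZ)
  | and A B ihA ihB =>
    rcases h with h | h
    · exact (ihA h).trans Set.subset_union_left
    · exact (ihB h).trans Set.subset_union_right

@[simp]
theorem snames_insert (A : NForm α) (Γ : Finset (NForm α)) :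
    snames (insert A Γ) = A.names ∪ snames Γ := by
  ext x; simp [snames]

theorem notMem_of_disjoint_snames {A : NForm α} {Γ : Finset (NForm α)}
    (h : Disjoint A.names (snames Γ)) : A ∉ Γ := by
  intro hA
  obtain ⟨x, hx⟩ := A.names_nonempty
  exact Set.disjoint_left.mp h hx (Set.mem_biUnion hA hx)

theorem sfSet_insert {A : NForm α} {Γ : Finset (NForm α)} (hA : A.sharingFree) (hΓ : SFSet Γ)
    (h : Disjoint A.names (snames Γ)) : SFSet (insert A Γ) := by
  have key : ∀ B ∈ Γ, Disjoint A.names B.names := fun B hB =>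
    h.mono_right (Set.subset_biUnion_of_mem (u := fun C : NForm α => C.names) hB)
  refine ⟨?_, ?_⟩
  · simpa using ⟨hA, hΓ.1⟩
  · intro B hB C hC hne
    rcases Finset.mem_insert.mp hB with hB | hB <;> rcases Finset.mem_insert.mp hC with hC | hC
    · exact absurd (hB.trans hC.symm) hne
    · exact hB ▸ key C hC
    · exact hC ▸ (key B hB).symm
    · exact hΓ.2 B hB C hC hne

theorem SFSet.of_insert {A : NForm α} {Γ : Finset (NForm α)} (hA : A ∉ Γ)
    (h : SFSet (insert A Γ)) : A.sharingFree ∧ SFSet Γ ∧ Disjoint A.names (snames Γ) := by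
  refine ⟨h.1 A (by simp), ⟨fun B hB => h.1 B (by simp [hB]), fun B hB C hC hne =>
    h.2 B (by simp [hB]) C (by simp [hC]) hne⟩, ?_⟩
  simp only [snames, Set.disjoint_iUnion_right]
  intro B hB
  exact h.2 A (by simp) B (by simp [hB]) (by rintro rfl; exact hA hB)

theorem mem_BrS_insert {A : NForm α} {Γ : Finset (NForm α)} (h : Disjoint A.names (snames Γ))
    {Z : Set ℕ} : Z ∈ BrS (insert A Γ) ↔ ∃ Y ∈ BrF A, ∃ X ∈ BrS Γ, Z = Y ∪ X := by
  have hsub : ∀ B ∈ Γ, B.names ⊆ snames Γ := fun B hB =>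
    Set.subset_biUnion_of_mem (u := fun C : NForm α => C.names) hB
  constructor
  · rintro ⟨hZ, hBr⟩
    rw [snames_insert] at hZ
    refine ⟨Z ∩ A.names, hBr A (by simp), Z ∩ snames Γ, ⟨Set.inter_subset_right, ?_⟩, ?_⟩
    · intro B hB
      rw [Set.inter_assoc, Set.inter_eq_right.mpr (hsub B hB)]
      exact hBr B (by simp [hB])
    · rw [← Set.inter_union_distrib_left, Set.inter_eq_left.mpr hZ]
  · rintro ⟨Y, hY, X, hX, rfl⟩
    have hYA := subset_names_of_mem_BrF hY
    refine ⟨by rw [snames_insert]; exact Set.union_subset_union hYA hX.1, ?_⟩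
    intro B hB
    rcases Finset.mem_insert.mp hB with rfl | hB
    · rw [Set.union_inter_distrib_right, Set.inter_eq_left.mpr hYA,
        (h.symm.mono_left hX.1).inter_eq, Set.union_empty]
      exact hY
    · rw [Set.union_inter_distrib_right, (h.mono hYA (hsub B hB)).inter_eq, Set.empty_union]
      exact hX.2 B hB

@[simp]
theorem hasAtomS_insert {A : NForm α} {Γ : Finset (NForm α)} {x : ℕ} {a : α} :
    HasAtomS (insert A Γ) x a ↔ HasAtom A x a ∨ HasAtomS Γ x a := by
  simp [HasAtomS]

theorem HasAtom.mem_names {A : NForm α} {x : ℕ} {a : α} (h : HasAtom A x a) : x ∈ A.names := by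
  induction A with
  | atom y b => exact h.1.symm
  | or A B ihA ihB => exact h.imp ihA ihB
  | and A B ihA ihB => exact h.imp ihA ihB

theorem HasAtomS.mem_snames {Γ : Finset (NForm α)} {x : ℕ} {a : α} (h : HasAtomS Γ x a) :
    x ∈ snames Γ := by
  obtain ⟨A, hA, h⟩ := h
  exact Set.mem_biUnion hA h.mem_names

theorem HasAtom.unique {A : NForm α} (hA : A.sharingFree) {x : ℕ} {a b : α}
    (ha : HasAtom A x a) (hb : HasAtom A x b) : a = b := by
  induction A with
  | atom y c => exact ha.2.symm.trans hb.2
  | or A B ihA ihB | and A B ihA ihB =>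
    obtain ⟨hA, hB, hd⟩ := hA
    rcases ha with ha | ha <;> rcases hb with hb | hb
    · exact ihA hA ha hb
    · exact (Set.disjoint_left.mp hd ha.mem_names hb.mem_names).elim
    · exact (Set.disjoint_left.mp hd hb.mem_names ha.mem_names).elim
    · exact ihB hB ha hb

theorem HasAtomS.unique {Γ : Finset (NForm α)} (hΓ : SFSet Γ) {x : ℕ} {a b : α}
    (ha : HasAtomS Γ x a) (hb : HasAtomS Γ x b) : a = b := by
  obtain ⟨A, hA, ha⟩ := ha
  obtain ⟨B, hB, hb⟩ := hb
  by_cases hAB : A = B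
  · subst hAB
    exact ha.unique (hΓ.1 A hA) hb
  · exact (Set.disjoint_left.mp (hΓ.2 A hA B hB hAB) ha.mem_names hb.mem_names).elim

theorem HasAtom.neg {bar : α → α} {A : NForm α} {x : ℕ} {a : α} (h : HasAtom A x a) :
    HasAtom (negF bar A) x (bar a) := by
  induction A with
  | atom y b => exact ⟨h.1, congrArg bar h.2⟩
  | or A B ihA ihB => exact h.imp ihA ihB
  | and A B ihA ihB => exact h.imp ihA ihB

theorem negF_negF {bar : α → α} (hbar : Function.Involutive bar) (A : NForm α) :
    negF bar (negF bar A) = A := by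
  induction A <;> simp_all [negF, hbar _]

/-- Every two-colouring of the names refutes a branch of `A` or of its negation. -/
theorem exists_branch_of_coloring (bar : α → α) (A : NForm α) (v : Set ℕ) :
    (∃ Y ∈ BrF A, Y ⊆ vᶜ) ∨ ∃ Z ∈ BrF (negF bar A), Z ⊆ v := by
  induction A with
  | atom x a =>
    by_cases hx : x ∈ v
    · exact Or.inr ⟨{x}, rfl, by simpa⟩
    · exact Or.inl ⟨{x}, rfl, by simpa⟩
  | or A B ihA ihB =>
    rcases ihA with ⟨Y, hY, hYv⟩ | ⟨Z, hZ, hZv⟩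
    · rcases ihB with ⟨Y', hY', hYv'⟩ | ⟨Z, hZ, hZv⟩
      · exact Or.inl ⟨Y ∪ Y', ⟨Y, hY, Y', hY', rfl⟩, Set.union_subset hYv hYv'⟩
      · exact Or.inr ⟨Z, Or.inr hZ, hZv⟩
    · exact Or.inr ⟨Z, Or.inl hZ, hZv⟩
  | and A B ihA ihB =>
    rcases ihA with ⟨Y, hY, hYv⟩ | ⟨Z, hZ, hZv⟩
    · exact Or.inl ⟨Y, Or.inl hY, hYv⟩
    · rcases ihB with ⟨Y, hY, hYv⟩ | ⟨Z', hZ', hZw⟩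
      · exact Or.inl ⟨Y, Or.inr hY, hYv⟩
      · exact Or.inr ⟨Z ∪ Z', ⟨Z, hZ, Z', hZ', rfl⟩, Set.union_subset hZv hZw⟩

/-! ### Alternating walks -/

/-- The side of the `i`-th edge of an alternating walk that starts on side `b`. -/
def side (b : Bool) (i : ℕ) : Bool := if Even i then b else !b

@[simp]
theorem side_zero (b : Bool) : side b 0 = b := by simp [side]

theorem side_succ (b : Bool) (i : ℕ) : side b (i + 1) = !side b i := by
  by_cases h : Even i <;> simp [side, h, Nat.even_add_one]

theorem side_add (b : Bool) (i k : ℕ) : side b (i + k) = side (side b i) k := by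
  induction k with
  | zero => simp
  | succ k ih => rw [← add_assoc, side_succ, side_succ, ih]

/-- `w 0, …, w n` is an alternating walk from outside `I` whose later vertices before `w n`
lie in `I`. -/
structure IsAltWalk (R : Bool → ℕ → ℕ → Prop) (I : Set ℕ) (b : Bool) (n : ℕ) (w : ℕ → ℕ) :
    Prop where
  start : w 0 ∉ I
  internal : ∀ i, 0 < i → i < n → w i ∈ I
  edge : ∀ i < n, R (side b i) (w i) (w (i + 1))

/-- `Reach R I b z`: the interface vertex `z` is the end of an alternating walk from outside `I`
whose last edge is on side `b`. -/
inductive Reach (R : Bool → ℕ → ℕ → Prop) (I : Set ℕ) : Bool → ℕ → Prop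
  | base {b x z} : x ∉ I → z ∈ I → R b x z → Reach R I b z
  | step {b z z'} : Reach R I b z → z' ∈ I → R (!b) z z' → Reach R I (!b) z'

section Walks

variable {R : Bool → ℕ → ℕ → Prop} {I : Set ℕ}

theorem Reach.mem {b : Bool} {z : ℕ} (h : Reach R I b z) : z ∈ I := by
  cases h <;> assumption

theorem IsAltWalk.append {b : Bool} {n : ℕ} {w : ℕ → ℕ} (hw : IsAltWalk R I b n w)
    (hn : 0 < n) (hI : w n ∈ I) {z : ℕ} (hz : R (side b n) (w n) z) :
    IsAltWalk R I b (n + 1) (fun i => if i ≤ n then w i else z) := by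
  refine ⟨by simpa using hw.start, fun i h0 hi => ?_, fun i hi => ?_⟩
  · have hi' : i ≤ n := by omega
    rcases hi'.lt_or_eq with h | rfl
    · simpa [hi'] using hw.internal i h0 h
    · simpa using hI
  · have hi' : i ≤ n := by omega
    rcases hi'.lt_or_eq with h | rfl
    · simpa [hi', Nat.succ_le_of_lt h] using hw.edge i h
    · simpa using hz

theorem Reach.exists_walk {b : Bool} {z : ℕ} (h : Reach R I b z) :
    ∃ c n w, 0 < n ∧ IsAltWalk R I c n w ∧ w n = z ∧ side c n = !b := by
  induction h with
  | @base b x z hx hz hR =>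
    refine ⟨b, 1, fun i => if i = 0 then x else z, one_pos,
      ⟨by simpa using hx, fun i h0 h1 => by omega, fun i hi => ?_⟩, by simp, by simp [side]⟩
    obtain rfl : i = 0 := by omega
    simpa using hR
  | @step b z z' h hz' hR ih =>
    obtain ⟨c, n, w, hn, hw, rfl, hs⟩ := ih
    exact ⟨c, n + 1, _, by omega, hw.append hn h.mem (hs ▸ hR), by simp,
      by rw [side_succ, hs]⟩

/-- If there is no complete alternating walk, no vertex is reached from both sides. -/
theorem Reach.not_both (hsymm : ∀ b u v, R b u v → R b v u)
    (hno : ∀ b n w, 0 < n → IsAltWalk R I b n w → w n ∈ I) {b : Bool} {z : ℕ}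
    (h : Reach R I b z) : ¬ Reach R I (!b) z := by
  have hstep : ∀ {b : Bool} {z x : ℕ}, Reach R I b z → R (!b) z x → x ∈ I := by
    intro b z x h hR
    obtain ⟨c, n, w, hn, hw, rfl, hs⟩ := h.exists_walk
    simpa using hno c (n + 1) _ (by omega) (hw.append hn h.mem (hs ▸ hR))
  induction h with
  | @base b x z hx hz hR =>
    intro h'
    exact hx (hstep h' (by simpa using hsymm _ _ _ hR))
  | @step b z z' h hz' hR ih =>
    intro h'
    rw [Bool.not_not] at h'
    exact ih (h'.step h.mem (hsymm _ _ _ hR))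

variable {bar : α → α} {L : Bool → ℕ → α → Prop}

/-- An involution without fixpoints has a set meeting each orbit in exactly one point. -/
theorem exists_polarity (hbar : Function.Involutive bar) (hfix : ∀ a, bar a ≠ a) :
    ∃ S : Set α, ∀ a, bar a ∈ S ↔ a ∉ S := by
  refine ⟨{a | WellOrderingRel a (bar a)}, fun a => ?_⟩
  simp only [Set.mem_ofPred_eq, hbar a]
  constructor
  · exact fun h h' => asymm_of WellOrderingRel h h'
  · intro h
    rcases trichotomous_of WellOrderingRel a (bar a) with hlt | heq | hgt
    · exact absurd hlt h
    · exact absurd heq.symm (hfix a)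
    · exact hgt

/-- If there is no complete alternating walk, the interface can be two-coloured so that no edge
of side `true` has its interface endpoints outside the colour class and no edge of side `false`
has its interface endpoints inside it. -/
theorem exists_coloring (hbar : Function.Involutive bar) (hfix : ∀ a, bar a ≠ a)
    (hsymm : ∀ b u v, R b u v → R b v u)
    (hR : ∀ b u v, R b u v → ∃ a, L b u a ∧ L b v (bar a))
    (hLuniq : ∀ b z a a', L b z a → L b z a' → a = a')
    (hLI : ∀ b z a, z ∈ I → L b z a → L (!b) z (bar a))
    (hno : ∀ b n w, 0 < n → IsAltWalk R I b n w → w n ∈ I) :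
    ∃ v : Set ℕ, (∀ x y, R true x y → (x ∈ I → x ∉ v) → (y ∈ I → y ∉ v) → False) ∧
      ∀ x y, R false x y → (x ∈ I → x ∈ v) → (y ∈ I → y ∈ v) → False := by
  obtain ⟨S, hS⟩ := exists_polarity hbar hfix
  have hedge : ∀ {b x y}, R b x y → x ∉ I → y ∈ I := by
    intro b x y h hx
    simpa using hno b 1 (fun i => if i = 0 then x else y) one_pos
      ⟨by simpa using hx, fun i h0 h1 => by omega, fun i hi => by
        obtain rfl : i = 0 := by omega
        simpa using h⟩
  refine ⟨{z | Reach R I true z ∨ (¬ Reach R I false z ∧ ∃ a ∈ S, L true z a)}, ?_, ?_⟩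
  · intro x y h hx hy
    by_cases hxI : x ∈ I
    · by_cases hyI : y ∈ I
      · have hx := hx hxI
        have hy := hy hyI
        simp only [Set.mem_ofPred_eq, not_or, not_and, not_exists] at hx hy
        have hxF : ¬ Reach R I false x := fun hr => hy.1 (hr.step hyI h)
        have hyF : ¬ Reach R I false y := fun hr => hx.1 (hr.step hxI (hsymm _ _ _ h))
        obtain ⟨a, hxa, hya⟩ := hR _ _ _ h
        exact hy.2 hyF _ ((hS a).mpr fun ha => hx.2 hxF a ha hxa) hya
      · exact hx hxI (Or.inl (.base hyI hxI (hsymm _ _ _ h)))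
    · have hyI := hedge h hxI
      exact hy hyI (Or.inl (.base hxI hyI h))
  · intro x y h hx hy
    by_cases hxI : x ∈ I
    · by_cases hyI : y ∈ I
      · have hxT : ¬ Reach R I true x := by
          intro hr
          have hr' : Reach R I false y := hr.step hyI h
          rcases hy hyI with hy | hy
          · exact hr'.not_both hsymm hno hy
          · exact hy.1 hr'
        have hyT : ¬ Reach R I true y := by
          intro hr
          have hr' : Reach R I false x := hr.step hxI (hsymm _ _ _ h)
          rcases hx hxI with hx | hx
          · exact hr'.not_both hsymm hno hx
          · exact hx.1 hr'
        obtain ⟨-, a, haS, ha⟩ := (hx hxI).resolve_left hxT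
        obtain ⟨-, b, hbS, hb⟩ := (hy hyI).resolve_left hyT
        obtain ⟨c, hxc, hyc⟩ := hR _ _ _ h
        obtain rfl := hLuniq _ _ _ _ ha (hLI _ _ _ hxI hxc)
        obtain rfl := hLuniq _ _ _ _ hb (hLI _ _ _ hyI hyc)
        exact (hS _).mp hbS haS
      · have hr : Reach R I false x := .base hyI hxI (hsymm _ _ _ h)
        rcases hx hxI with hx | hx
        · exact hr.not_both hsymm hno hx
        · exact hx.1 hr
    · have hyI := hedge h hxI
      have hr : Reach R I false y := .base hxI hyI h
      rcases hy hyI with hy | hy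
      · exact hr.not_both hsymm hno hy
      · exact hy.1 hr

/-- Along an alternating walk, the polarity at departure is constant. -/
theorem IsAltWalk.label (hbar : Function.Involutive bar)
    (hR : ∀ b u v, R b u v → ∃ a, L b u a ∧ L b v (bar a))
    (hLuniq : ∀ b z a a', L b z a → L b z a' → a = a')
    (hLI : ∀ b z a, z ∈ I → L b z a → L (!b) z (bar a))
    {b : Bool} {n : ℕ} {w : ℕ → ℕ} (hw : IsAltWalk R I b n w) (hn : 0 < n) :
    ∃ c, ∀ i < n, L (side b i) (w i) c ∧ L (side b i) (w (i + 1)) (bar c) := by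
  obtain ⟨c, hc, -⟩ := hR _ _ _ (hw.edge 0 hn)
  have key : ∀ i < n, L (side b i) (w i) c → L (side b i) (w (i + 1)) (bar c) := by
    intro i hi h
    obtain ⟨a, ha, ha'⟩ := hR _ _ _ (hw.edge i hi)
    rwa [hLuniq _ _ _ _ h ha]
  refine ⟨c, fun i => ?_⟩
  induction i with
  | zero => exact fun hi => ⟨hc, key 0 hi hc⟩
  | succ i ih =>
    intro hi
    have h := hLI _ _ _ (hw.internal (i + 1) (by omega) hi) (ih (by omega)).2
    rw [hbar c, ← side_succ] at h
    exact ⟨h, key _ hi h⟩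

/-- Removing the closed segment between two equal vertices met on the same side. -/
theorem IsAltWalk.shortcut {b : Bool} {n : ℕ} {w : ℕ → ℕ} (hw : IsAltWalk R I b n w) {i k : ℕ}
    (h0 : 0 < i) (hk : i + k < n) (hs : side b i = side b (i + k)) (heq : w i = w (i + k)) :
    IsAltWalk R I b (n - k) (fun j => if j < i then w j else w (j + k)) := by
  refine ⟨by simpa [h0] using hw.start, fun j hj0 hj => ?_, fun j hj => ?_⟩
  · split_ifs
    · exact hw.internal j hj0 (by omega)
    · exact hw.internal (j + k) (by omega) (by omega)
  · rcases lt_or_ge j i with h | h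
    · rcases (Nat.succ_le_of_lt h).lt_or_eq with h' | h'
      · have h' : j + 1 < i := h'
        simpa [h, h'] using hw.edge j (by omega)
      · have h' : j + 1 = i := h'
        have := hw.edge j (by omega)
        rw [h', heq] at this
        simpa [h, h'] using this
    · have h' : ¬ j < i := by omega
      have h'' : ¬ j + 1 < i := by omega
      obtain ⟨m, rfl⟩ := Nat.exists_eq_add_of_le h
      have := hw.edge (i + k + m) (by omega)
      rw [side_add, ← hs, ← side_add] at this
      rw [if_neg h', if_neg h'']
      convert this using 2 <;> omega

/-- A complete alternating walk of minimal length has pairwise distinct vertices. -/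
theorem exists_injective_walk (hbar : Function.Involutive bar) (hfix : ∀ a, bar a ≠ a)
    (hR : ∀ b u v, R b u v → ∃ a, L b u a ∧ L b v (bar a))
    (hLuniq : ∀ b z a a', L b z a → L b z a' → a = a')
    (hLI : ∀ b z a, z ∈ I → L b z a → L (!b) z (bar a))
    (hLX : ∀ b z a, z ∉ I → L b z a → L (!b) z a)
    (h : ∃ n b w, 0 < n ∧ IsAltWalk R I b n w ∧ w n ∉ I) :
    ∃ n b w, 0 < n ∧ IsAltWalk R I b n w ∧ w n ∉ I ∧
      ∀ i < n + 1, ∀ j < n + 1, w i = w j → i = j := by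
  obtain ⟨b, w, hn, hw, hend⟩ := Nat.find_spec h
  set n := Nat.find h with hndef
  refine ⟨n, b, w, hn, hw, hend, ?_⟩
  obtain ⟨c, hc⟩ := hw.label hbar hR hLuniq hLI hn
  have hne : ∀ i j, i < j → j ≤ n → w i ≠ w j := by
    intro i j hij hj heq
    rcases Nat.eq_zero_or_pos i with rfl | hi
    · rcases hj.lt_or_eq with hj | rfl
      · exact hw.start (heq ▸ hw.internal j hij hj)
      · have h0 := (hc 0 hn).1
        have h1 := (hc (n - 1) (by omega)).2
        rw [Nat.sub_add_cancel hn, ← heq] at h1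
        have h2 : L (side b (n - 1)) (w 0) c := by
          by_cases hs : side b (n - 1) = side b 0
          · rwa [hs]
          · rw [Bool.eq_not_of_ne hs]
            exact hLX _ _ _ hw.start h0
        exact hfix c (hLuniq _ _ _ _ h1 h2)
    · have hiI := hw.internal i hi (by omega)
      rcases hj.lt_or_eq with hj | rfl
      · by_cases hs : side b i = side b j
        · obtain ⟨k, rfl⟩ := Nat.exists_eq_add_of_le hij.le
          refine Nat.find_min h (m := n - k) (by omega)
            ⟨b, _, by omega, hw.shortcut hi hj hs heq, ?_⟩
          have h1 : ¬ n - k < i := by omega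
          have h2 : n - k + k = n := by omega
          simpa [h1, h2] using hend
        · have h1 := hLI _ _ _ hiI (hc i (by omega)).1
          have h2 := (hc j hj).1
          rw [← heq, Bool.eq_not_of_ne (Ne.symm hs)] at h2
          exact hfix c (hLuniq _ _ _ _ h1 h2)
      · exact hend (heq ▸ hiI)
  intro i hi j hj heq
  rcases lt_trichotomy i j with hij | hij | hij
  · exact (hne i j hij (by omega) heq).elim
  · exact hij
  · exact (hne j i hij (by omega) heq.symm).elim

end Walks

/-! ### Saturated graphs -/

/-- A bl-graph is saturated for `Γ` if its vertices are the names of `Γ`, its labels are exactly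
the branches of `Γ`, and every edge joins dual atoms of `Γ` lying on each of its labels. -/
structure Saturated (bar : α → α) (G : BLGraph) (Γ : Finset (NForm α)) : Prop where
  verts : G.verts = snames Γ
  br : ∀ X, (∃ e, G.rel e X) ↔ X ∈ BrS Γ
  dual : ∀ e X, G.rel e X → ∃ x y a, e = s(x, y) ∧ x ∈ X ∧ y ∈ X ∧
    HasAtomS Γ x a ∧ HasAtomS Γ y (bar a)

theorem BLGraph.ext' {G H : BLGraph} (hv : G.verts = H.verts)
    (hr : ∀ e X, G.rel e X ↔ H.rel e X) : G = H := by
  cases G; cases H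
  simp only at hv hr
  subst hv
  congr
  funext e X
  exact propext (hr e X)

theorem Saturated.union {bar : α → α} {G H : BLGraph} {Γ : Finset (NForm α)}
    (hG : Saturated bar G Γ) (hH : Saturated bar H Γ) : Saturated bar (G.union H) Γ where
  verts := by simp [BLGraph.union, hG.verts, hH.verts]
  br X := by
    have h1 := hG.br X
    have h2 := hH.br X
    simp only [BLGraph.union, exists_or]
    tauto
  dual e X h := h.elim (hG.dual e X) (hH.dual e X)

theorem mem_BrS_insert_or {A B : NForm α} {Γ : Finset (NForm α)} (hAB : Disjoint A.names B.names)
    (hA : Disjoint A.names (snames Γ)) (hB : Disjoint B.names (snames Γ)) (X : Set ℕ) :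
    X ∈ BrS (insert (.or A B) Γ) ↔ X ∈ BrS (insert A (insert B Γ)) := by
  rw [mem_BrS_insert (by simp [NForm.names, hA, hB]), mem_BrS_insert (by simp [hAB, hA])]
  simp only [mem_BrS_insert hB, BrF, Set.mem_ofPred_eq]
  constructor
  · rintro ⟨_, ⟨Y, hY, Z, hZ, rfl⟩, W, hW, rfl⟩
    exact ⟨Y, hY, _, ⟨Z, hZ, W, hW, rfl⟩, Set.union_assoc _ _ _⟩
  · rintro ⟨Y, hY, _, ⟨Z, hZ, W, hW, rfl⟩, rfl⟩
    exact ⟨_, ⟨Y, hY, Z, hZ, rfl⟩, W, hW, (Set.union_assoc _ _ _).symm⟩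

theorem mem_BrS_insert_and {A B : NForm α} {Γ : Finset (NForm α)}
    (hA : Disjoint A.names (snames Γ)) (hB : Disjoint B.names (snames Γ)) (X : Set ℕ) :
    X ∈ BrS (insert (.and A B) Γ) ↔ X ∈ BrS (insert A Γ) ∨ X ∈ BrS (insert B Γ) := by
  rw [mem_BrS_insert (by simp [NForm.names, hA, hB]), mem_BrS_insert hA, mem_BrS_insert hB]
  simp only [BrF, Set.mem_union, or_and_right, exists_or]

theorem saturated_or_iff {bar : α → α} {G : BLGraph} {A B : NForm α} {Γ : Finset (NForm α)}
    (hAB : Disjoint A.names B.names) (hA : Disjoint A.names (snames Γ))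
    (hB : Disjoint B.names (snames Γ)) :
    Saturated bar G (insert (.or A B) Γ) ↔ Saturated bar G (insert A (insert B Γ)) := by
  constructor <;> rintro ⟨h1, h2, h3⟩ <;> refine ⟨?_, ?_, ?_⟩
  · simpa [NForm.names, Set.union_assoc] using h1
  · simpa only [mem_BrS_insert_or hAB hA hB] using h2
  · simpa [HasAtom, or_assoc] using h3
  · simpa [NForm.names, Set.union_assoc] using h1
  · simpa only [mem_BrS_insert_or hAB hA hB] using h2
  · simpa [HasAtom, or_assoc] using h3

theorem Saturated.and {bar : α → α} {G H : BLGraph} {A B : NForm α} {Γ : Finset (NForm α)}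
    (hA : Disjoint A.names (snames Γ)) (hB : Disjoint B.names (snames Γ))
    (hG : Saturated bar G (insert A Γ)) (hH : Saturated bar H (insert B Γ)) :
    Saturated bar (G.union H) (insert (.and A B) Γ) where
  verts := by
    simp only [BLGraph.union, hG.verts, hH.verts, snames_insert, NForm.names]
    ext; simp; tauto
  br X := by
    rw [mem_BrS_insert_and hA hB, ← hG.br, ← hH.br]
    simp only [BLGraph.union, exists_or]
  dual e X h := by
    rcases h with h | h
    · obtain ⟨x, y, a, he, hx, hy, h1, h2⟩ := hG.dual e X h
      refine ⟨x, y, a, he, hx, hy, ?_, ?_⟩ <;> simp [HasAtom] at h1 h2 ⊢ <;> tauto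
    · obtain ⟨x, y, a, he, hx, hy, h1, h2⟩ := hH.dual e X h
      refine ⟨x, y, a, he, hx, hy, ?_, ?_⟩ <;> simp [HasAtom] at h1 h2 ⊢ <;> tauto

theorem blid_spec {bar : α → α} (hbar : Function.Involutive bar) (A C : NForm α)
    (h : A.shape = (negF bar C).shape) :
    (blid A C).verts = A.names ∪ C.names ∧
    (∀ X, (∃ e, (blid A C).rel e X) ↔ ∃ Y ∈ BrF A, ∃ Z ∈ BrF C, X = Y ∪ Z) ∧
    ∀ e X, (blid A C).rel e X → ∃ x y a, e = s(x, y) ∧ x ∈ X ∧ y ∈ X ∧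
      HasAtom A x a ∧ HasAtom C y (bar a) := by
  induction A generalizing C with
  | atom x a =>
    cases C <;> simp only [negF, NForm.shape, Shape.atom.injEq, reduceCtorEq] at h
    rename_i y c
    refine ⟨rfl, fun X => ?_, ?_⟩
    · simp only [blid, BrF, Set.mem_singleton_iff, exists_eq_left,
        Set.singleton_union]
    · rintro e X ⟨rfl, rfl⟩
      exact ⟨x, y, a, rfl, by simp, by simp, ⟨rfl, rfl⟩, rfl, by rw [h, hbar]⟩
  | or A B ihA ihB =>
    cases C <;> simp only [negF, NForm.shape, Shape.or.injEq, reduceCtorEq] at h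
    rename_i C D
    obtain ⟨hA1, hA2, hA3⟩ := ihA C h.1
    obtain ⟨hB1, hB2, hB3⟩ := ihB D h.2
    refine ⟨?_, fun X => ?_, ?_⟩
    · simp only [blid, BLGraph.union, blwk, hA1, hB1, NForm.names]
      ext; simp; tauto
    · simp only [blid, BLGraph.union, blwk, BrF, exists_or]
      constructor
      · rintro (⟨e, Y, Z, hY, hZ, rfl⟩ | ⟨e, Y, Z, hY, hZ, rfl⟩)
        · obtain ⟨U, hU, V, hV, rfl⟩ := (hA2 Y).mp ⟨e, hY⟩
          exact ⟨U ∪ Z, ⟨U, hU, Z, hZ, rfl⟩, V, Or.inl hV, Set.union_right_comm _ _ _⟩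
        · obtain ⟨U, hU, V, hV, rfl⟩ := (hB2 Y).mp ⟨e, hY⟩
          exact ⟨Z ∪ U, ⟨Z, hZ, U, hU, rfl⟩, V, Or.inr hV, by
            rw [Set.union_right_comm, Set.union_comm U Z]⟩
      · rintro ⟨_, ⟨U, hU, V, hV, rfl⟩, Z, hZ | hZ, rfl⟩
        · obtain ⟨e, he⟩ := (hA2 _).mpr ⟨U, hU, Z, hZ, rfl⟩
          exact Or.inl ⟨e, _, V, he, hV, Set.union_right_comm _ _ _⟩
        · obtain ⟨e, he⟩ := (hB2 _).mpr ⟨V, hV, Z, hZ, rfl⟩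
          exact Or.inr ⟨e, _, U, he, hU, by
            rw [Set.union_assoc, Set.union_comm]⟩
    · rintro e _ (⟨Y, Z, hY, hZ, rfl⟩ | ⟨Y, Z, hY, hZ, rfl⟩)
      · obtain ⟨x, y, a, he, hx, hy, h1, h2⟩ := hA3 e Y hY
        exact ⟨x, y, a, he, Or.inl hx, Or.inl hy, Or.inl h1, Or.inl h2⟩
      · obtain ⟨x, y, a, he, hx, hy, h1, h2⟩ := hB3 e Y hY
        exact ⟨x, y, a, he, Or.inl hx, Or.inl hy, Or.inr h1, Or.inr h2⟩
  | and A B ihA ihB =>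
    cases C <;> simp only [negF, NForm.shape, Shape.and.injEq, reduceCtorEq] at h
    rename_i C D
    obtain ⟨hA1, hA2, hA3⟩ := ihA C h.1
    obtain ⟨hB1, hB2, hB3⟩ := ihB D h.2
    refine ⟨?_, fun X => ?_, ?_⟩
    · simp only [blid, BLGraph.union, blwk, hA1, hB1, NForm.names]
      ext; simp; tauto
    · simp only [blid, BLGraph.union, blwk, BrF, exists_or]
      constructor
      · rintro (⟨e, Y, Z, hY, hZ, rfl⟩ | ⟨e, Y, Z, hY, hZ, rfl⟩)
        · obtain ⟨U, hU, V, hV, rfl⟩ := (hA2 Y).mp ⟨e, hY⟩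
          exact ⟨U, Or.inl hU, V ∪ Z, ⟨V, hV, Z, hZ, rfl⟩, Set.union_assoc _ _ _⟩
        · obtain ⟨U, hU, V, hV, rfl⟩ := (hB2 Y).mp ⟨e, hY⟩
          exact ⟨U, Or.inr hU, Z ∪ V, ⟨Z, hZ, V, hV, rfl⟩, by
            rw [Set.union_assoc, Set.union_comm V Z]⟩
      · rintro ⟨U, hU | hU, _, ⟨V, hV, Z, hZ, rfl⟩, rfl⟩
        · obtain ⟨e, he⟩ := (hA2 _).mpr ⟨U, hU, V, hV, rfl⟩
          exact Or.inl ⟨e, _, Z, he, hZ, (Set.union_assoc _ _ _).symm⟩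
        · obtain ⟨e, he⟩ := (hB2 _).mpr ⟨U, hU, Z, hZ, rfl⟩
          exact Or.inr ⟨e, _, V, he, hV, by
            rw [Set.union_assoc, Set.union_comm V Z]⟩
    · rintro e _ (⟨Y, Z, hY, hZ, rfl⟩ | ⟨Y, Z, hY, hZ, rfl⟩)
      · obtain ⟨x, y, a, he, hx, hy, h1, h2⟩ := hA3 e Y hY
        exact ⟨x, y, a, he, Or.inl hx, Or.inl hy, Or.inl h1, Or.inl h2⟩
      · obtain ⟨x, y, a, he, hx, hy, h1, h2⟩ := hB3 e Y hY
        exact ⟨x, y, a, he, Or.inl hx, Or.inl hy, Or.inr h1, Or.inr h2⟩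

theorem saturated_ax {bar : α → α} (hbar : Function.Involutive bar) {Γ : Finset (NForm α)}
    {A C : NForm α} (h : A.shape = (negF bar C).shape) (hAC : Disjoint A.names C.names)
    (hA : Disjoint A.names (snames Γ)) (hC : Disjoint C.names (snames Γ)) :
    Saturated bar (blwk (snames Γ) (BrS Γ) (blid A C)) (insert A (insert C Γ)) := by
  obtain ⟨h1, h2, h3⟩ := blid_spec hbar A C h
  refine ⟨?_, fun X => ?_, ?_⟩
  · simp [blwk, h1, Set.union_assoc]
  · rw [mem_BrS_insert (by simp [hAC, hA])]
    simp only [mem_BrS_insert hC, blwk]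
    constructor
    · rintro ⟨e, Y, Z, hY, hZ, rfl⟩
      obtain ⟨U, hU, V, hV, rfl⟩ := (h2 Y).mp ⟨e, hY⟩
      exact ⟨U, hU, _, ⟨V, hV, Z, hZ, rfl⟩, Set.union_assoc _ _ _⟩
    · rintro ⟨U, hU, _, ⟨V, hV, Z, hZ, rfl⟩, rfl⟩
      obtain ⟨e, he⟩ := (h2 _).mpr ⟨U, hU, V, hV, rfl⟩
      exact ⟨e, _, Z, he, hZ, (Set.union_assoc _ _ _).symm⟩
  · rintro e _ ⟨Y, Z, hY, hZ, rfl⟩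
    obtain ⟨x, y, a, he, hx, hy, h1, h2⟩ := h3 e Y hY
    exact ⟨x, y, a, he, Or.inl hx, Or.inl hy, by simp [h1], by simp [h2]⟩

/-! ### Saturation of composites -/

section Composition

variable {bar : α → α} {G H : BLGraph} {A : NForm α} {Γ : Finset (NForm α)}

/-- The graph on a given side of a composition. -/
def sideGraph (G H : BLGraph) : Bool → BLGraph
  | true => G
  | false => H

/-- The cut formula on a given side of a composition. -/
def sideForm (bar : α → α) (A : NForm α) : Bool → NForm α
  | true => A
  | false => negF bar A

@[simp]
theorem names_sideForm (b : Bool) : (sideForm bar A b).names = A.names := by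
  cases b <;> simp [sideForm]

theorem HasAtom.not_side (hbar : Function.Involutive bar) {b : Bool} {x : ℕ} {a : α}
    (h : HasAtom (sideForm bar A b) x a) : HasAtom (sideForm bar A (!b)) x (bar a) := by
  cases b
  · have := h.neg (bar := bar)
    rwa [sideForm, negF_negF hbar] at this
  · exact h.neg

theorem altPath_of_walk {I X : Set ℕ} {b : Bool} {n : ℕ} {w : ℕ → ℕ} (hn : 0 < n)
    (hw : IsAltWalk (fun b u v => (sideGraph G H b).relI I s(u, v) X) I b n w)
    (hinj : ∀ i < n + 1, ∀ j < n + 1, w i = w j → i = j) : AltPath G H I X (n + 1) w := by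
  refine ⟨by omega, hinj, fun i h0 hi => hw.internal i h0 (by omega), ?_⟩
  cases b
  · refine Or.inr fun i hi => ⟨fun he => ?_, fun he => ?_⟩ <;>
      simpa [side, he, sideGraph] using hw.edge i (by omega)
  · refine Or.inl fun i hi => ⟨fun he => ?_, fun he => ?_⟩ <;>
      simpa [side, he, sideGraph] using hw.edge i (by omega)

theorem walk_of_altPath {I X : Set ℕ} {n : ℕ} {w : ℕ → ℕ} (h : AltPath G H I X n w)
    (h0 : w 0 ∉ I) :
    ∃ b, IsAltWalk (fun b u v => (sideGraph G H b).relI I s(u, v) X) I b (n - 1) w := by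
  obtain ⟨-, -, hmid, he | he⟩ := h
  · refine ⟨true, h0, fun i hi hi' => hmid i hi (by omega), fun i hi => ?_⟩
    by_cases hev : Even i
    · simpa [side, hev, sideGraph] using (he i (by omega)).1 hev
    · simpa [side, hev, sideGraph] using (he i (by omega)).2 hev
  · refine ⟨false, h0, fun i hi hi' => hmid i hi (by omega), fun i hi => ?_⟩
    by_cases hev : Even i
    · simpa [side, hev, sideGraph] using (he i (by omega)).1 hev
    · simpa [side, hev, sideGraph] using (he i (by omega)).2 hev

/-- Saturation is preserved by composition along a cut. -/
theorem Saturated.comp (hbar : Function.Involutive bar) (hfix : ∀ a, bar a ≠ a)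
    (hA : A.sharingFree) (hΓ : SFSet Γ) (hd : Disjoint A.names (snames Γ))
    (hG : Saturated bar G (insert A Γ)) (hH : Saturated bar H (insert (negF bar A) Γ)) :
    Saturated bar (G.comp H A.names) Γ := by
  set I := A.names with hI
  have hS : ∀ b, Saturated bar (sideGraph G H b) (insert (sideForm bar A b) Γ) := by
    rintro (_ | _)
    exacts [hH, hG]
  have hd' : ∀ b, Disjoint (sideForm bar A b).names (snames Γ) := fun b => by simpa using hd
  have hSF : ∀ b, SFSet (insert (sideForm bar A b) Γ) := fun b =>
    sfSet_insert (by cases b; exacts [sharingFree_negF bar hA, hA]) hΓ (hd' b)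
  let L : Bool → ℕ → α → Prop := fun b => HasAtomS (insert (sideForm bar A b) Γ)
  have hLuniq : ∀ b z a a', L b z a → L b z a' → a = a' := fun b z a a' h h' =>
    h.unique (hSF b) h'
  have hLI : ∀ b z a, z ∈ I → L b z a → L (!b) z (bar a) := by
    intro b z a hz h
    rcases hasAtomS_insert.mp h with h | h
    · exact hasAtomS_insert.mpr (Or.inl (h.not_side hbar))
    · exact (Set.disjoint_left.mp hd hz h.mem_snames).elim
  have hout : ∀ b z a, z ∉ I → L b z a → HasAtomS Γ z a := by
    intro b z a hz h
    rcases hasAtomS_insert.mp h with h | h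
    · exact (hz (by simpa using h.mem_names)).elim
    · exact h
  have hLX : ∀ b z a, z ∉ I → L b z a → L (!b) z a := fun b z a hz h =>
    hasAtomS_insert.mpr (Or.inr (hout b z a hz h))
  have hedge : ∀ X b u v, (sideGraph G H b).relI I s(u, v) X →
      X ∈ BrS Γ ∧ (∃ a, L b u a ∧ L b v (bar a)) ∧ (u ∉ I → u ∈ X) ∧ (v ∉ I → v ∈ X) := by
    rintro _ b u v ⟨Y, hY, rfl⟩
    refine ⟨?_, ?_⟩
    · obtain ⟨U, hU, V, hV, rfl⟩ := (mem_BrS_insert (hd' b)).mp (((hS b).br Y).mp ⟨_, hY⟩)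
      have hUI : U ⊆ I := by simpa using subset_names_of_mem_BrF hU
      rwa [Set.union_sdiff_distrib, Set.sdiff_eq_empty.mpr hUI, Set.empty_union,
        (hd.symm.mono_left hV.1).sdiff_eq_left]
    · obtain ⟨x, y, a, he, hx, hy, h1, h2⟩ := (hS b).dual _ _ hY
      rcases Sym2.eq_iff.mp he with ⟨rfl, rfl⟩ | ⟨rfl, rfl⟩
      · exact ⟨⟨a, h1, h2⟩, fun h => ⟨hx, h⟩, fun h => ⟨hy, h⟩⟩
      · exact ⟨⟨bar a, h2, by rwa [hbar a]⟩, fun h => ⟨hy, h⟩, fun h => ⟨hx, h⟩⟩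
  refine ⟨?_, fun X => ⟨?_, fun hX => ?_⟩, ?_⟩
  · simp only [BLGraph.comp, hG.verts, hH.verts, snames_insert, names_negF, Set.union_self]
    rw [Set.union_sdiff_left, hd.symm.sdiff_eq_left]
  · rintro ⟨e, n, w, hp, h0, -⟩
    obtain ⟨b, hw⟩ := walk_of_altPath hp h0
    exact (hedge X _ _ _ (hw.edge 0 (by have := hp.1; omega))).1
  · have hR := fun b u v h => (hedge X b u v h).2.1
    suffices h : ∃ n b w, 0 < n ∧
        IsAltWalk (fun b u v => (sideGraph G H b).relI I s(u, v) X) I b n w ∧ w n ∉ I by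
      obtain ⟨n, b, w, hn, hw, hend, hinj⟩ :=
        exists_injective_walk hbar hfix hR hLuniq hLI hLX h
      exact ⟨s(w 0, w n), n + 1, w, altPath_of_walk hn hw hinj, hw.start, hend, rfl⟩
    by_contra hcon
    have hsymm : ∀ b u v, (sideGraph G H b).relI I s(u, v) X →
        (sideGraph G H b).relI I s(v, u) X := fun b u v h => by rwa [Sym2.eq_swap]
    obtain ⟨v, hv1, hv2⟩ := exists_coloring hbar hfix hsymm hR hLuniq hLI
      (fun b n w hn hw => by
        by_contra h
        exact hcon ⟨n, b, w, hn, hw, h⟩)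
    have hXI : Disjoint X I := hd.symm.mono_left hX.1
    have hfind : ∀ b, ∀ Y ∈ BrF (sideForm bar A b), ∃ x y,
        (sideGraph G H b).relI I s(x, y) X ∧ (x ∈ I → x ∈ Y) ∧ (y ∈ I → y ∈ Y) := by
      intro b Y hY
      have hYI : Y ⊆ I := by simpa using subset_names_of_mem_BrF hY
      obtain ⟨e, he⟩ := ((hS b).br (Y ∪ X)).mpr ((mem_BrS_insert (hd' b)).mpr ⟨Y, hY, X, hX, rfl⟩)
      obtain ⟨x, y, a, rfl, hx, hy, -⟩ := (hS b).dual _ _ he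
      refine ⟨x, y, ⟨_, he, ?_⟩, fun h => hx.resolve_right fun h' => ?_,
        fun h => hy.resolve_right fun h' => ?_⟩
      · rw [Set.union_sdiff_distrib, Set.sdiff_eq_empty.mpr hYI, Set.empty_union,
          hXI.sdiff_eq_left]
      · exact Set.disjoint_left.mp hXI h' h
      · exact Set.disjoint_left.mp hXI h' h
    rcases exists_branch_of_coloring bar A v with ⟨Y, hY, hYv⟩ | ⟨Z, hZ, hZv⟩
    · obtain ⟨x, y, he, hx, hy⟩ := hfind true Y hY
      exact hv1 x y he (fun h => hYv (hx h)) (fun h => hYv (hy h))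
    · obtain ⟨x, y, he, hx, hy⟩ := hfind false Z hZ
      exact hv2 x y he (fun h => hZv (hx h)) (fun h => hZv (hy h))
  · rintro e X ⟨n, w, hp, h0, hend, rfl⟩
    obtain ⟨b, hw⟩ := walk_of_altPath hp h0
    have hn : 0 < n - 1 := by have := hp.1; omega
    obtain ⟨c, hc⟩ := hw.label hbar (fun b u v h => (hedge X b u v h).2.1) hLuniq hLI hn
    have hlast := hedge X _ _ _ (hw.edge (n - 1 - 1) (by omega))
    have hlabel := (hc (n - 1 - 1) (by omega)).2
    rw [Nat.sub_add_cancel hn] at hlast hlabel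
    exact ⟨w 0, w (n - 1), c, rfl, (hedge X _ _ _ (hw.edge 0 hn)).2.2.1 h0, hlast.2.2.2 hend,
      hout _ _ _ h0 (hc 0 hn).1, hout _ _ _ hend hlabel⟩

end Composition

/-! ### Soundness and completeness for saturated graphs -/

theorem erase_erase_insert_insert {A B : NForm α} {Γ : Finset (NForm α)} (hAB : A ≠ B)
    (hA : A ∉ Γ) (hB : B ∉ Γ) : ((insert A (insert B Γ)).erase A).erase B = Γ := by
  rw [Finset.erase_insert (by simp [hAB, hA]), Finset.erase_insert hB]

/-- The conclusion of a derivation is sharing-free and its graph is saturated for it. -/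
theorem WF.saturated {bar : α → α} (hbar : Function.Involutive bar) (hfix : ∀ a, bar a ≠ a)
    {P : Deriv α} (hP : WF bar P) :
    SFSet (concl P) ∧ Saturated bar (blaxg P) (concl P) := by
  induction P with
  | ax Γ A C =>
    obtain ⟨hs, hA, hC, hΓ, hAC, hAΓ, hCΓ⟩ := hP
    exact ⟨sfSet_insert hA (sfSet_insert hC hΓ hCΓ) (by simp [hAC, hAΓ]),
      saturated_ax hbar hs hAC hAΓ hCΓ⟩
  | cut A P Q ihP ihQ =>
    obtain ⟨hP, hQ, Γ, hA, -, hcP, hcQ, hAs, hΓ, hd⟩ := hP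
    have hcut : concl (.cut A P Q) = Γ := by rw [concl, hcP, Finset.erase_insert hA]
    rw [hcut]
    exact ⟨hΓ, .comp hbar hfix hAs hΓ hd (hcP ▸ (ihP hP).2) (hcQ ▸ (ihQ hQ).2)⟩
  | sup P Q ihP ihQ =>
    obtain ⟨hP, hQ, hc⟩ := hP
    exact ⟨(ihP hP).1, (ihP hP).2.union (hc ▸ (ihQ hQ).2)⟩
  | orI A B P ihP =>
    obtain ⟨hP, Γ, hA, hB, hne, hcP, hAs, hBs, hΓ, hAB, hAΓ, hBΓ⟩ := hP
    have hor : concl (.orI A B P) = insert (.or A B) Γ := by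
      rw [concl, hcP, erase_erase_insert_insert hne hA hB]
    rw [hor]
    exact ⟨sfSet_insert ⟨hAs, hBs, hAB⟩ hΓ (by simp [NForm.names, hAΓ, hBΓ]),
      (saturated_or_iff hAB hAΓ hBΓ).mpr (hcP ▸ (ihP hP).2)⟩
  | andI A B P Q ihP ihQ =>
    obtain ⟨hP, hQ, Γ, hA, hB, hcP, hcQ, hAs, hBs, hΓ, hAB, hAΓ, hBΓ⟩ := hP
    have hand : concl (.andI A B P Q) = insert (.and A B) Γ := by
      rw [concl, hcP, Finset.erase_insert hA]
    rw [hand]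
    exact ⟨sfSet_insert ⟨hAs, hBs, hAB⟩ hΓ (by simp [NForm.names, hAΓ, hBΓ]),
      .and hAΓ hBΓ (hcP ▸ (ihP hP).2) (hcQ ▸ (ihQ hQ).2)⟩

/-- Number of connectives of a formula. -/
def NForm.connectives : NForm α → ℕ
  | .atom _ _ => 0
  | .or A B => A.connectives + B.connectives + 1
  | .and A B => A.connectives + B.connectives + 1

theorem BrS_eq_of_atomic {Γ : Finset (NForm α)} (hΓ : SFSet Γ)
    (hat : ∀ A ∈ Γ, ∃ x a, A = .atom x a) (X : Set ℕ) : X ∈ BrS Γ ↔ X = snames Γ := by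
  induction Γ using Finset.induction_on generalizing X with
  | empty => simp [BrS, snames, Set.subset_empty_iff]
  | insert A Γ hA ih =>
    obtain ⟨-, hΓ', hd⟩ := hΓ.of_insert hA
    obtain ⟨x, a, rfl⟩ := hat A (by simp)
    rw [mem_BrS_insert hd, snames_insert]
    simp only [ih hΓ' fun B hB => hat B (by simp [hB]), BrF, Set.mem_singleton_iff,
      exists_eq_left, NForm.names]

theorem atom_mem_of_hasAtomS {Γ : Finset (NForm α)} (hat : ∀ A ∈ Γ, ∃ x a, A = .atom x a)
    {x : ℕ} {a : α} (h : HasAtomS Γ x a) : NForm.atom x a ∈ Γ := by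
  obtain ⟨A, hA, h⟩ := h
  obtain ⟨y, b, rfl⟩ := hat A hA
  obtain ⟨rfl, rfl⟩ := h
  exact hA

/-- On an atomic sequent, an edge between dual atoms is realized by an axiom. -/
theorem exists_deriv_of_edge {bar : α → α} (hbar : Function.Involutive bar)
    (hfix : ∀ a, bar a ≠ a) {Γ : Finset (NForm α)} (hΓ : SFSet Γ)
    (hat : ∀ A ∈ Γ, ∃ x a, A = .atom x a) {x y : ℕ} {a : α}
    (hx : HasAtomS Γ x a) (hy : HasAtomS Γ y (bar a)) :
    ∃ Q : Deriv α, WF bar Q ∧ CutFree Q ∧ concl Q = Γ ∧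
      blaxg Q = ⟨snames Γ, fun e X => e = s(x, y) ∧ X = snames Γ⟩ := by
  have hbr := BrS_eq_of_atomic hΓ hat
  have hne : NForm.atom x a ≠ NForm.atom y (bar a) := by
    intro h
    injection h with h1 h2
    exact hfix a h2.symm
  set Δ := (Γ.erase (.atom x a)).erase (.atom y (bar a)) with hΔ
  have hy' : NForm.atom y (bar a) ∈ Γ.erase (.atom x a) :=
    Finset.mem_erase.mpr ⟨hne.symm, atom_mem_of_hasAtomS hat hy⟩
  have hins : insert (.atom x a) (insert (.atom y (bar a)) Δ) = Γ := by
    rw [hΔ, Finset.insert_erase hy', Finset.insert_erase (atom_mem_of_hasAtomS hat hx)]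
  have hΓ' := hΓ
  rw [← hins] at hΓ'
  obtain ⟨h1, h2, h3⟩ := hΓ'.of_insert (by simp [hΔ, hne])
  obtain ⟨h4, h5, h6⟩ := h2.of_insert (by simp [hΔ])
  rw [snames_insert, Set.disjoint_union_right] at h3
  have hs : (NForm.atom x a).shape = (negF bar (NForm.atom y (bar a))).shape := by
    simp [negF, NForm.shape, hbar a]
  have hwf : WF bar (.ax Δ (.atom x a) (.atom y (bar a))) :=
    ⟨hs, h1, h4, h5, h3.1, h3.2, h6⟩
  have hsat := (hwf.saturated hbar hfix).2
  rw [show concl (.ax Δ (.atom x a) (.atom y (bar a))) = Γ from hins] at hsat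
  refine ⟨_, hwf, trivial, hins, BLGraph.ext' hsat.verts fun e X => ⟨fun h => ?_, ?_⟩⟩
  · refine ⟨?_, (hbr X).mp ((hsat.br X).mp ⟨e, h⟩)⟩
    obtain ⟨Y, Z, h, -, -⟩ := h
    exact h.1
  · rintro ⟨he, rfl⟩
    obtain ⟨e', Y, Z, h', hZ, hX⟩ := (hsat.br _).mpr ((hbr _).mpr rfl)
    exact ⟨Y, Z, ⟨he, h'.2⟩, hZ, hX⟩

/-- On an atomic sequent, any nonempty finite set of edges between dual atoms is realized by
superposing axioms. -/
theorem exists_deriv_of_edges {bar : α → α} (hbar : Function.Involutive bar)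
    (hfix : ∀ a, bar a ≠ a) {Γ : Finset (NForm α)} (hΓ : SFSet Γ)
    (hat : ∀ A ∈ Γ, ∃ x a, A = .atom x a) {E : Finset (Sym2 ℕ)} (hE : E.Nonempty)
    (hdual : ∀ e ∈ E, ∃ x y a, e = s(x, y) ∧ HasAtomS Γ x a ∧ HasAtomS Γ y (bar a)) :
    ∃ Q : Deriv α, WF bar Q ∧ CutFree Q ∧ concl Q = Γ ∧
      blaxg Q = ⟨snames Γ, fun e X => e ∈ E ∧ X = snames Γ⟩ := by
  induction hE using Finset.Nonempty.cons_induction with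
  | singleton e =>
    obtain ⟨x, y, a, rfl, hx, hy⟩ := hdual e (by simp)
    simpa using exists_deriv_of_edge hbar hfix hΓ hat hx hy
  | cons e E he hE ih =>
    obtain ⟨Q, hQ, hQcf, hQc, hQg⟩ := ih fun e' he' => hdual e' (by simp [he'])
    obtain ⟨x, y, a, rfl, hx, hy⟩ := hdual e (by simp)
    obtain ⟨P, hP, hPcf, hPc, hPg⟩ := exists_deriv_of_edge hbar hfix hΓ hat hx hy
    refine ⟨.sup P Q, ⟨hP, hQ, hPc.trans hQc.symm⟩, ⟨hPcf, hQcf⟩, hPc, ?_⟩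
    simp only [blaxg, hPg, hQg, BLGraph.union, Set.union_self, Finset.mem_cons, or_and_right]

theorem finite_names (A : NForm α) : A.names.Finite := by
  induction A with
  | atom x a => exact Set.finite_singleton x
  | or A B ihA ihB => exact ihA.union ihB
  | and A B ihA ihB => exact ihA.union ihB

theorem finite_snames (Γ : Finset (NForm α)) : (snames Γ).Finite :=
  Γ.finite_toSet.biUnion fun A _ => finite_names A

/-- A saturated graph for an atomic sequent is the graph of a cut-free derivation. -/
theorem Saturated.exists_cutFree_of_atomic {bar : α → α} (hbar : Function.Involutive bar)
    (hfix : ∀ a, bar a ≠ a) {G : BLGraph} {Γ : Finset (NForm α)} (hΓ : SFSet Γ)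
    (hat : ∀ A ∈ Γ, ∃ x a, A = .atom x a) (hG : Saturated bar G Γ) :
    ∃ Q : Deriv α, WF bar Q ∧ CutFree Q ∧ concl Q = Γ ∧ blaxg Q = G := by
  have hbr := BrS_eq_of_atomic hΓ hat
  have hfin : {e | G.rel e (snames Γ)}.Finite := by
    refine Set.Finite.subset (((finite_snames Γ).prod (finite_snames Γ)).image
      fun p : ℕ × ℕ => s(p.1, p.2)) fun e he => ?_
    obtain ⟨x, y, a, rfl, hx, hy, -⟩ := hG.dual e _ he
    exact ⟨(x, y), ⟨hx, hy⟩, rfl⟩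
  obtain ⟨e₀, he₀⟩ := (hG.br _).mpr ((hbr _).mpr rfl)
  obtain ⟨Q, hQ, hcf, hc, hg⟩ := exists_deriv_of_edges hbar hfix hΓ hat (E := hfin.toFinset)
    ⟨e₀, by simpa using he₀⟩ fun e he => by
      obtain ⟨x, y, a, rfl, -, -, h⟩ := hG.dual e _ (by simpa using he)
      exact ⟨x, y, a, rfl, h⟩
  refine ⟨Q, hQ, hcf, hc, hg.trans (BLGraph.ext' hG.verts.symm fun e X => ?_)⟩
  simp only [Set.Finite.mem_toFinset, Set.mem_ofPred_eq]
  constructor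
  · rintro ⟨h, rfl⟩
    exact h
  · intro h
    obtain rfl := (hbr X).mp ((hG.br X).mp ⟨e, h⟩)
    exact ⟨h, rfl⟩

/-- The part of a saturated graph whose labels are branches of a subsequent. -/
def BLGraph.onBranches (G : BLGraph) (Γ : Finset (NForm α)) : BLGraph :=
  ⟨snames Γ, fun e X => G.rel e X ∧ X ∈ BrS Γ⟩

theorem Saturated.onBranches {bar : α → α} {G : BLGraph} {Γ Δ : Finset (NForm α)}
    (hG : Saturated bar G Γ) (hBr : BrS Δ ⊆ BrS Γ)
    (hatom : ∀ x a, x ∈ snames Δ → HasAtomS Γ x a → HasAtomS Δ x a) :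
    Saturated bar (G.onBranches Δ) Δ where
  verts := rfl
  br X := by
    simp only [BLGraph.onBranches, exists_and_right, hG.br]
    exact and_iff_right_of_imp fun h => hBr h
  dual e X h := by
    obtain ⟨x, y, a, he, hx, hy, h1, h2⟩ := hG.dual e X h.1
    exact ⟨x, y, a, he, hx, hy, hatom x a (h.2.1 hx) h1, hatom y _ (h.2.1 hy) h2⟩

/-- Every saturated graph is the graph of a cut-free derivation. -/
theorem Saturated.exists_cutFree {bar : α → α} (hbar : Function.Involutive bar)
    (hfix : ∀ a, bar a ≠ a) {G : BLGraph} {Γ : Finset (NForm α)} (hΓ : SFSet Γ)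
    (hG : Saturated bar G Γ) :
    ∃ Q : Deriv α, WF bar Q ∧ CutFree Q ∧ concl Q = Γ ∧ blaxg Q = G := by
  induction hn : ∑ A ∈ Γ, A.connectives using Nat.strong_induction_on generalizing G Γ with
  | _ n ih =>
  by_cases hat : ∀ A ∈ Γ, ∃ x a, A = .atom x a
  · exact hG.exists_cutFree_of_atomic hbar hfix hΓ hat
  push Not at hat
  obtain ⟨A, hA, hat⟩ := hat
  obtain ⟨Δ, hAΔ, rfl⟩ : ∃ Δ, A ∉ Δ ∧ Γ = insert A Δ :=
    ⟨Γ.erase A, Finset.notMem_erase _ _, (Finset.insert_erase hA).symm⟩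
  obtain ⟨hAs, hΔ, hd⟩ := hΓ.of_insert hAΔ
  rw [Finset.sum_insert hAΔ] at hn
  cases A with
  | atom x a => exact absurd rfl (hat x a)
  | or B C =>
    obtain ⟨hB, hC, hBC⟩ := hAs
    rw [NForm.names, Set.disjoint_union_left] at hd
    have hBΔ := notMem_of_disjoint_snames hd.1
    have hCΔ := notMem_of_disjoint_snames hd.2
    have hBCΔ : Disjoint B.names (snames (insert C Δ)) := by simp [hBC, hd.1]
    have hB' := notMem_of_disjoint_snames hBCΔ
    have hne : B ≠ C := fun h => hB' (by simp [h])
    obtain ⟨Q, hQ, hcf, hc, hg⟩ := ih (∑ A ∈ insert B (insert C Δ), A.connectives) (by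
        rw [Finset.sum_insert hB', Finset.sum_insert hCΔ, ← hn, NForm.connectives]
        omega)
      (sfSet_insert hB (sfSet_insert hC hΔ hd.2) hBCΔ)
      ((saturated_or_iff hBC hd.1 hd.2).mp hG) rfl
    refine ⟨.orI B C Q, ⟨hQ, Δ, hBΔ, hCΔ, hne, hc, hB, hC, hΔ, hBC, hd.1, hd.2⟩, hcf, ?_, hg⟩
    rw [concl, hc, erase_erase_insert_insert hne hBΔ hCΔ]
  | and B C =>
    obtain ⟨hB, hC, hBC⟩ := hAs
    rw [NForm.names, Set.disjoint_union_left] at hd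
    have hBΔ := notMem_of_disjoint_snames hd.1
    have hCΔ := notMem_of_disjoint_snames hd.2
    have hbr := mem_BrS_insert_and hd.1 hd.2
    have hGB : Saturated bar (G.onBranches (insert B Δ)) (insert B Δ) := by
      refine hG.onBranches (fun X hX => (hbr X).mpr (Or.inl hX)) fun x a hx h => ?_
      simp only [hasAtomS_insert, HasAtom, snames_insert] at h hx ⊢
      rcases h with (h | h) | h
      · exact Or.inl h
      · rcases hx with hx | hx
        · exact (Set.disjoint_left.mp hBC hx h.mem_names).elim
        · exact (Set.disjoint_left.mp hd.2 h.mem_names hx).elim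
      · exact Or.inr h
    have hGC : Saturated bar (G.onBranches (insert C Δ)) (insert C Δ) := by
      refine hG.onBranches (fun X hX => (hbr X).mpr (Or.inr hX)) fun x a hx h => ?_
      simp only [hasAtomS_insert, HasAtom, snames_insert] at h hx ⊢
      rcases h with (h | h) | h
      · rcases hx with hx | hx
        · exact (Set.disjoint_left.mp hBC h.mem_names hx).elim
        · exact (Set.disjoint_left.mp hd.1 h.mem_names hx).elim
      · exact Or.inl h
      · exact Or.inr h
    obtain ⟨P, hP, hPcf, hPc, hPg⟩ := ih (∑ A ∈ insert B Δ, A.connectives) (by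
        rw [Finset.sum_insert hBΔ, ← hn, NForm.connectives]
        omega)
      (sfSet_insert hB hΔ hd.1) hGB rfl
    obtain ⟨Q, hQ, hQcf, hQc, hQg⟩ := ih (∑ A ∈ insert C Δ, A.connectives) (by
        rw [Finset.sum_insert hCΔ, ← hn, NForm.connectives]
        omega)
      (sfSet_insert hC hΔ hd.2) hGC rfl
    refine ⟨.andI B C P Q,
      ⟨hP, hQ, Δ, hBΔ, hCΔ, hPc, hQc, hB, hC, hΔ, hBC, hd.1, hd.2⟩, ⟨hPcf, hQcf⟩, ?_, ?_⟩
    · rw [concl, hPc, Finset.erase_insert hBΔ]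
    · rw [blaxg, hPg, hQg]
      refine BLGraph.ext' ?_ fun e X => ?_
      · rw [(hGB.and hd.1 hd.2 hGC).verts, hG.verts]
      · simp only [BLGraph.union, BLGraph.onBranches, ← and_or_left, ← hbr]
        exact and_iff_left_of_imp fun h => (hG.br X).mp ⟨e, h⟩

end GS4

/-- cut-elimination preserving branch-labeled axiom graphs. -/
theorem GS4.cut_elimination {α : Type} (bar : α → α)
    (hbar : Function.Involutive bar) (hfix : ∀ a, bar a ≠ a)
    (P : GS4.Deriv α) (hP : GS4.WF bar P) :
    ∃ Q : GS4.Deriv α, GS4.WF bar Q ∧ GS4.CutFree Q ∧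
      GS4.concl Q = GS4.concl P ∧ GS4.blaxg Q = GS4.blaxg P := by
  obtain ⟨hΓ, hG⟩ := hP.saturated hbar hfix
  exact hG.exists_cutFree hbar hfix hΓ
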